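/- Let r ≥ 3 and let G be a {C_{1r}, C*}-free linear r-graph containing an edge e = {u_1,...,u_r} with d(u_1), d(u_2) ≥ (r-1)^2 + 1 and d(u_i) ≥ (r-1)^2 for 3 ≤ i ≤ r. Let S be the union of all edges intersecting e. Then |S| = (r-1)^3 + r, every vertex of S has degree at most (r-1)^2 + 1, and the number of edges intersecting S is at most r(r-1)^2 + 1. -/

import Mathlib

open Finset

/-- A linear `r`-uniform hypergraph: every edge has `r` vertices and
any two distinct edges intersect in at most one vertex. -/
def IsLinear {V : Type*} [DecidableEq V] (r : ℕ) (E : Finset (Finset V)) : Prop :=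
  (∀ e ∈ E, e.card = r) ∧ ∀ e ∈ E, ∀ f ∈ E, e ≠ f → (e ∩ f).card ≤ 1

/-- The degree of a vertex: the number of edges containing it. -/
def degree {V : Type*} [DecidableEq V] (E : Finset (Finset V)) (v : V) : ℕ :=
  (E.filter (fun e => v ∈ e)).card

/-- `E` contains a copy of the `r`-crown `C_{1r}`: `r` pairwise disjoint edges
together with one edge meeting each of them in exactly one vertex. -/
def HasCrown {V : Type*} [DecidableEq V] (r : ℕ) (E : Finset (Finset V)) : Prop :=
  ∃ e ∈ E, ∃ f : Fin r → Finset V,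
    (∀ i, f i ∈ E) ∧ (∀ i, f i ≠ e) ∧
    (∀ i j, i ≠ j → f i ∩ f j = ∅) ∧
    (∀ i, (e ∩ f i).card = 1)

/-- `E` contains a copy of `C*`: `r-2` edges pairwise meeting exactly in a common
vertex `v`, two further edges disjoint from each other and from all the others,
and one edge meeting each of the `r` edges in exactly one vertex, avoiding `v`. -/
def HasCStar {V : Type*} [DecidableEq V] (r : ℕ) (E : Finset (Finset V)) : Prop :=
  ∃ v : V, ∃ e ∈ E, ∃ f : Fin r → Finset V,
    (∀ i, f i ∈ E) ∧ (∀ i, f i ≠ e) ∧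
    (∀ i : Fin r, (i : ℕ) < r - 2 → v ∈ f i) ∧
    (∀ i j : Fin r, (i : ℕ) < r - 2 → (j : ℕ) < r - 2 → i ≠ j → f i ∩ f j = {v}) ∧
    (∀ i j : Fin r, r - 2 ≤ (i : ℕ) → i ≠ j → f i ∩ f j = ∅) ∧
    (∀ i, (e ∩ f i).card = 1) ∧ v ∉ e

/-!
Let `a` and `b` be two vertices of `e` of degree greater than `(r-1)^2`, and let `v ∈ e`. Edges
other than `e` through the other vertices of `e` can be chosen greedily to be pairwise disjoint.
They have `(r-1)^2` vertices outside `e`, and as there is no crown, every edge `f ≠ e` through `v`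
contains one of these vertices. Hence `d(v) ≤ (r-1)^2 + 1`, and if equality holds, then all these
vertices are neighbors of `v`. The greedy choice can start from any edge meeting `e`, so the
neighborhood of `a` contains those of the other vertices of `e`, and `S` is the union of `e` and the
neighborhood of `a`. It remains to see that an edge disjoint from `e` is disjoint from `S`.

If `r ≥ 4`, this holds because there is no such `e`: by counting, some vertex is a neighbor of all
vertices of `e`, and the edges joining it to the vertices of `e` other than `a` and `b` extend
greedily to a copy of `C*`.

If `r = 3` and `e = {a, b, c}`, then `a` and `b` have a common neighborhood `W` with eight vertices.
The edges through `a`, `b` and `c` pair up vertices of `W` by involutions `α`, `β` and `γ`, where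
`γ` may miss two vertices. As there is no crown, `γ` agrees with `αβ = βα`. So `W` consists of two
orbits `{x, αx, βx, αβx}`, and an edge disjoint from `e` that contains `x ∈ W` also contains `αβx`
and two vertices `w`, `αβw` of the other orbit, since otherwise it lies in a crown. But it has only
three vertices.
-/

namespace LinearHypergraph

variable {V : Type*} [DecidableEq V] {r : ℕ} {E : Finset (Finset V)} {e f g h I J X : Finset V}
  {a b c v w x : V}

theorem eq_of_mem_of_mem (hE : IsLinear r E) (hf : f ∈ E) (hg : g ∈ E) (hvw : v ≠ w)
    (hvf : v ∈ f) (hwf : w ∈ f) (hvg : v ∈ g) (hwg : w ∈ g) : f = g := by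
  by_contra hne
  exact hvw (card_le_one.1 (hE.2 f hf g hg hne) v (mem_inter.2 ⟨hvf, hvg⟩) w
    (mem_inter.2 ⟨hwf, hwg⟩))

theorem inter_eq_singleton_of_mem_of_mem (hE : IsLinear r E) (hf : f ∈ E) (hg : g ∈ E)
    (hfg : f ≠ g) (hvf : v ∈ f) (hvg : v ∈ g) : f ∩ g = {v} :=
  eq_singleton_iff_unique_mem.2 ⟨mem_inter.2 ⟨hvf, hvg⟩, fun w hw => by
    by_contra hwv
    obtain ⟨hwf, hwg⟩ := mem_inter.1 hw
    exact hfg (eq_of_mem_of_mem hE hf hg hwv hwf hvf hwg hvg)⟩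

theorem degree_le_of_forall_not_disjoint (hE : IsLinear r E) (he : e ∈ E) (hv : v ∉ e)
    (hmeet : ∀ f ∈ E, v ∈ f → ¬Disjoint e f) : degree E v ≤ r := by
  rw [← hE.1 e he]
  refine card_le_card_of_forall_subsingleton (fun f w => w ∈ f) (fun f hf => ?_) ?_
  · obtain ⟨hfE, hvf⟩ := mem_filter.1 hf
    exact not_disjoint_iff.1 (hmeet f hfE hvf)
  · rintro w hw f ⟨hf, hwf⟩ g ⟨hg, hwg⟩
    obtain ⟨hfE, hvf⟩ := mem_filter.1 hf
    obtain ⟨hgE, hvg⟩ := mem_filter.1 hg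
    exact eq_of_mem_of_mem hE hfE hgE (ne_of_mem_of_not_mem hw hv) hwf hvf hwg hvg

/-- The edges through `v` other than `e`; in applications `v ∈ e`. -/
def otherEdges (E : Finset (Finset V)) (e : Finset V) (v : V) : Finset (Finset V) :=
  (E.filter (fun f => v ∈ f)).erase e

theorem mem_otherEdges : f ∈ otherEdges E e v ↔ f ≠ e ∧ f ∈ E ∧ v ∈ f := by
  simp [otherEdges]

theorem card_otherEdges_add_one (he : e ∈ E) (hv : v ∈ e) :
    (otherEdges E e v).card + 1 = degree E v :=
  card_erase_add_one (mem_filter.2 ⟨he, hv⟩)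

theorem card_erase_of_mem_otherEdges (hE : IsLinear r E) (hf : f ∈ otherEdges E e v) :
    (f.erase v).card = r - 1 := by
  obtain ⟨-, hfE, hvf⟩ := mem_otherEdges.1 hf
  rw [card_erase_of_mem hvf, hE.1 f hfE]

theorem eq_of_mem_otherEdges (hE : IsLinear r E) (he : e ∈ E) (hv : v ∈ e) (hw : w ∈ e)
    (hf : f ∈ otherEdges E e v) (hwf : w ∈ f) : w = v := by
  obtain ⟨hfe, hfE, hvf⟩ := mem_otherEdges.1 hf
  by_contra hwv
  exact hfe (eq_of_mem_of_mem hE hfE he hwv hwf hvf hw hv)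

theorem inter_eq_singleton_of_mem_otherEdges (hE : IsLinear r E) (he : e ∈ E) (hv : v ∈ e)
    (hf : f ∈ otherEdges E e v) : e ∩ f = {v} := by
  obtain ⟨hfe, hfE, hvf⟩ := mem_otherEdges.1 hf
  exact inter_eq_singleton_of_mem_of_mem hE he hfE hfe.symm hv hvf

theorem disjoint_of_disjoint_erase (hE : IsLinear r E) (he : e ∈ E) (hv : v ∈ e) (hw : w ∈ e)
    (hvw : v ≠ w) (hf : f ∈ otherEdges E e v) (hfg : Disjoint f (g.erase w)) : Disjoint f g := by
  have hwf : w ∉ f := fun hwf => hvw (eq_of_mem_otherEdges hE he hv hw hf hwf).symm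
  rwa [← disjoint_erase_comm, erase_eq_of_notMem hwf] at hfg

/-- The vertices other than `v` on the edges through `v` other than `e`. -/
def neighbors (E : Finset (Finset V)) (e : Finset V) (v : V) : Finset V :=
  (otherEdges E e v).biUnion (fun f => f.erase v)

theorem mem_neighbors : x ∈ neighbors E e v ↔ ∃ f ∈ otherEdges E e v, x ≠ v ∧ x ∈ f := by
  simp [neighbors]

theorem card_neighbors (hE : IsLinear r E) (v : V) :
    (neighbors E e v).card = (otherEdges E e v).card * (r - 1) := by
  rw [neighbors, card_biUnion]
  · exact sum_const_nat fun f hf => card_erase_of_mem_otherEdges hE hf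
  · intro f hf g hg hfg
    obtain ⟨-, hfE, hvf⟩ := mem_otherEdges.1 hf
    obtain ⟨-, hgE, hvg⟩ := mem_otherEdges.1 hg
    refine disjoint_left.2 fun x hxf hxg => hfg ?_
    obtain ⟨hxv, hxf⟩ := mem_erase.1 hxf
    exact eq_of_mem_of_mem hE hfE hgE hxv hxf hvf (mem_of_mem_erase hxg) hvg

theorem disjoint_neighbors (hE : IsLinear r E) (he : e ∈ E) (hv : v ∈ e) :
    Disjoint e (neighbors E e v) := by
  refine disjoint_left.2 fun x hx hxN => ?_
  obtain ⟨f, hf, hxv, hxf⟩ := mem_neighbors.1 hxN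
  exact hxv (eq_of_mem_otherEdges hE he hv hx hf hxf)

theorem card_otherEdges_le_of_forall_not_disjoint (hE : IsLinear r E) (hv : v ∉ X)
    (hX : ∀ f ∈ otherEdges E e v, ¬Disjoint f X) : (otherEdges E e v).card ≤ X.card := by
  refine card_le_card_of_forall_subsingleton (fun f x => x ∈ f) (fun f hf => ?_) ?_
  · obtain ⟨x, hxf, hxX⟩ := not_disjoint_iff.1 (hX f hf)
    exact ⟨x, hxX, hxf⟩
  · rintro x hx f ⟨hf, hxf⟩ g ⟨hg, hxg⟩
    obtain ⟨-, hfE, hvf⟩ := mem_otherEdges.1 hf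
    obtain ⟨-, hgE, hvg⟩ := mem_otherEdges.1 hg
    exact eq_of_mem_of_mem hE hfE hgE (ne_of_mem_of_not_mem hx hv) hxf hvf hxg hvg

theorem exists_disjoint_of_card_lt (hE : IsLinear r E) (hv : v ∉ X)
    (hX : X.card < (otherEdges E e v).card) : ∃ f ∈ otherEdges E e v, Disjoint f X := by
  contrapose! hX
  exact card_otherEdges_le_of_forall_not_disjoint hE hv hX

theorem exists_inter_eq_singleton (hE : IsLinear r E) (hv : v ∉ X)
    (hX : ∀ f ∈ otherEdges E e v, ¬Disjoint f X) (hcard : X.card ≤ (otherEdges E e v).card)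
    (hx : x ∈ X) : ∃ f ∈ otherEdges E e v, f ∩ X = {x} := by
  obtain ⟨f, hf, hfx⟩ := exists_disjoint_of_card_lt hE (fun hvx => hv (mem_of_mem_erase hvx))
    ((card_erase_lt_of_mem hx).trans_le hcard)
  have hsub : f ∩ X ⊆ {x} := by
    rwa [← sdiff_eq_empty_iff_subset, inter_sdiff_assoc, ← erase_eq, ← disjoint_iff_inter_eq_empty]
  exact ⟨f, hf, (subset_singleton_iff.1 hsub).resolve_left
    (mt disjoint_iff_inter_eq_empty.2 (hX f hf))⟩

/-! ### Pendant matchings -/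

/-- `f` assigns to the vertices `w ∈ I` of `e` pairwise disjoint edges `f w ≠ e` through `w`. For
`I = e` these edges together with `e` form a crown. -/
structure IsPendantMatching (E : Finset (Finset V)) (e I : Finset V) (f : V → Finset V) :
    Prop where
  mem : ∀ w ∈ I, f w ∈ otherEdges E e w
  pairwiseDisjoint : (I : Set V).PairwiseDisjoint f

/-- The vertices other than `w` on the edges `f w`, for `w ∈ I`. -/
def outerVertices (I : Finset V) (f : V → Finset V) : Finset V :=
  I.biUnion fun w => (f w).erase w

theorem mem_outerVertices {f : V → Finset V} :
    x ∈ outerVertices I f ↔ ∃ w ∈ I, x ≠ w ∧ x ∈ f w := by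
  simp [outerVertices]

namespace IsPendantMatching

variable {f : V → Finset V}

theorem empty : IsPendantMatching E e ∅ f :=
  ⟨by simp, by simp⟩

theorem singleton (hg : g ∈ otherEdges E e v) : IsPendantMatching E e {v} fun _ => g :=
  ⟨by simpa using hg, by simp⟩

theorem union {g : V → Finset V} (hf : IsPendantMatching E e I f) (hg : IsPendantMatching E e J g)
    (hfg : ∀ w ∈ I, ∀ z ∈ J, Disjoint (f w) (g z)) :
    IsPendantMatching E e (I ∪ J) (I.piecewise f g) := by
  have hcases : ∀ w ∈ I ∪ J, w ∈ I ∧ I.piecewise f g w = f w ∨ w ∈ J ∧ I.piecewise f g w = g w := by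
    intro w hw
    by_cases hwI : w ∈ I
    · exact Or.inl ⟨hwI, piecewise_eq_of_mem _ _ _ hwI⟩
    · exact Or.inr ⟨(mem_union.1 hw).resolve_left hwI, piecewise_eq_of_notMem _ _ _ hwI⟩
  refine ⟨fun w hw => ?_, fun w hw z hz hwz => ?_⟩
  · obtain ⟨hw, hfw⟩ | ⟨hw, hgw⟩ := hcases w hw
    · exact hfw ▸ hf.mem w hw
    · exact hgw ▸ hg.mem w hw
  · rw [Function.onFun]
    obtain ⟨hw, hw'⟩ | ⟨hw, hw'⟩ := hcases w hw <;> obtain ⟨hz, hz'⟩ | ⟨hz, hz'⟩ := hcases z hz <;>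
      rw [hw', hz']
    exacts [hf.pairwiseDisjoint hw hz hwz, hfg w hw z hz, (hfg z hz w hw).symm,
      hg.pairwiseDisjoint hw hz hwz]

theorem insert (hM : IsPendantMatching E e I f) (hg : g ∈ otherEdges E e v)
    (hdisj : ∀ w ∈ I, Disjoint g (f w)) :
    IsPendantMatching E e (insert v I) (Function.update f v g) := by
  rw [insert_eq, ← piecewise_singleton (fun _ => g) f v]
  exact (singleton hg).union hM fun w _ => hdisj

theorem hasCrown (hM : IsPendantMatching E e e f) (hE : IsLinear r E) (he : e ∈ E) :
    HasCrown r E := by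
  let σ := (e.equivFinOfCardEq (hE.1 e he)).symm
  refine ⟨e, he, fun i => f (σ i), fun i => ?_, fun i => ?_, fun i j hij => ?_, fun i => ?_⟩
  · exact (mem_otherEdges.1 (hM.mem _ (σ i).2)).2.1
  · exact (mem_otherEdges.1 (hM.mem _ (σ i).2)).1
  · exact disjoint_iff_inter_eq_empty.1 (hM.pairwiseDisjoint (σ i).2 (σ j).2
      fun hσ => hij (σ.injective (Subtype.ext hσ)))
  · rw [inter_eq_singleton_of_mem_otherEdges hE he (σ i).2 (hM.mem _ (σ i).2), card_singleton]

theorem disjoint_outerVertices (hM : IsPendantMatching E e I f) (hE : IsLinear r E) (he : e ∈ E)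
    (hI : I ⊆ e) : Disjoint e (outerVertices I f) := by
  refine disjoint_left.2 fun x hx hxO => ?_
  obtain ⟨w, hw, hxw, hxf⟩ := mem_outerVertices.1 hxO
  exact hxw (eq_of_mem_otherEdges hE he (hI hw) hx (hM.mem w hw) hxf)

theorem card_outerVertices_le (hM : IsPendantMatching E e I f) (hE : IsLinear r E) :
    (outerVertices I f).card ≤ I.card * (r - 1) :=
  card_biUnion_le_card_mul _ _ _ fun w hw => (card_erase_of_mem_otherEdges hE (hM.mem w hw)).le

end IsPendantMatching

theorem exists_isPendantMatching (hE : IsLinear r E) (he : e ∈ E) (hI : I ⊆ e) :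
    ∀ {X : Finset V}, Disjoint e X →
      (∀ w ∈ I, X.card + (I.card - 1) * (r - 1) < (otherEdges E e w).card) →
      ∃ f, IsPendantMatching E e I f ∧ ∀ w ∈ I, Disjoint (f w) X := by
  induction I using Finset.induction_on with
  | empty => exact fun _ _ => ⟨fun _ => ∅, .empty, by simp⟩
  | insert v I hvI ih =>
    intro X hX hcard
    obtain ⟨hv, hI⟩ := insert_subset_iff.1 hI
    rw [card_insert_of_notMem hvI, Nat.add_sub_cancel] at hcard
    obtain ⟨g, hg, hgX⟩ := exists_disjoint_of_card_lt hE (disjoint_left.1 hX hv)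
      ((Nat.le_add_right _ _).trans_lt (hcard v (mem_insert_self v I)))
    have hXg : Disjoint e (X ∪ g.erase v) := disjoint_union_right.2 ⟨hX, disjoint_left.2
      fun w hw hwg => (mem_erase.1 hwg).1
        (eq_of_mem_otherEdges hE he hv hw hg (mem_of_mem_erase hwg))⟩
    obtain ⟨f, hf, hfX⟩ := ih hI hXg fun w hw => by
      have hcard_union := card_union_le X (g.erase v)
      rw [card_erase_of_mem_otherEdges hE hg] at hcard_union
      have hcard_w := hcard w (mem_insert_of_mem hw)
      have hI_pos : 1 ≤ I.card := card_pos.2 ⟨w, hw⟩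
      rw [← Nat.sub_add_cancel hI_pos, add_mul] at hcard_w
      omega
    simp only [disjoint_union_right] at hfX
    refine ⟨Function.update f v g, hf.insert hg fun w hw => ?_, ?_⟩
    · exact (disjoint_of_disjoint_erase hE he (hI hw) hv (ne_of_mem_of_not_mem hw hvI)
        (hf.mem w hw) (hfX w hw).2).symm
    · rw [forall_mem_insert, Function.update_self]
      refine ⟨hgX, fun w hw => ?_⟩
      rw [Function.update_of_ne (ne_of_mem_of_not_mem hw hvI)]
      exact (hfX w hw).1

/-! ### Vertices of large degree -/

section CrownFree

variable (hE : IsLinear r E) (hcrown : ¬HasCrown r E) (he : e ∈ E)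

include hE hcrown he

theorem not_disjoint_outerVertices (hv : v ∈ e) {f : V → Finset V}
    (hM : IsPendantMatching E e (e.erase v) f) (hg : g ∈ otherEdges E e v) :
    ¬Disjoint g (outerVertices (e.erase v) f) := by
  intro hdisj
  have hM' := hM.insert hg fun w hw => by
    obtain ⟨hwv, hwe⟩ := mem_erase.1 hw
    refine disjoint_of_disjoint_erase hE he hv hwe hwv.symm hg ?_
    exact hdisj.mono_right (subset_biUnion_of_mem (fun w => (f w).erase w) hw)
  rw [insert_erase hv] at hM'
  exact hcrown (hM'.hasCrown hE he)

theorem degree_le_of_isPendantMatching (hv : v ∈ e) {f : V → Finset V}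
    (hM : IsPendantMatching E e (e.erase v) f) : degree E v ≤ (r - 1) ^ 2 + 1 := by
  have hvO := disjoint_left.1 (hM.disjoint_outerVertices hE he (erase_subset v e)) hv
  rw [← card_otherEdges_add_one he hv, sq]
  refine Nat.add_le_add_right ?_ 1
  calc (otherEdges E e v).card
      ≤ (outerVertices (e.erase v) f).card :=
        card_otherEdges_le_of_forall_not_disjoint hE hvO fun g hg =>
          not_disjoint_outerVertices hE hcrown he hv hM hg
    _ ≤ (e.erase v).card * (r - 1) := hM.card_outerVertices_le hE
    _ = (r - 1) * (r - 1) := by rw [card_erase_of_mem hv, hE.1 e he]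

/-- Equality case of the count in `degree_le_of_isPendantMatching`. -/
theorem exists_inter_outerVertices_eq_singleton (hv : v ∈ e) (hdv : (r - 1) ^ 2 < degree E v)
    {f : V → Finset V} (hM : IsPendantMatching E e (e.erase v) f)
    (hx : x ∈ outerVertices (e.erase v) f) :
    ∃ g ∈ otherEdges E e v, g ∩ outerVertices (e.erase v) f = {x} := by
  have hcard := hM.card_outerVertices_le hE
  rw [card_erase_of_mem hv, hE.1 e he, ← sq] at hcard
  rw [← card_otherEdges_add_one he hv, Nat.lt_add_one_iff] at hdv
  exact exists_inter_eq_singleton hE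
    (disjoint_left.1 (hM.disjoint_outerVertices hE he (erase_subset v e)) hv)
    (fun g hg => not_disjoint_outerVertices hE hcrown he hv hM hg) (hcard.trans hdv) hx

theorem outerVertices_subset_neighbors (hv : v ∈ e) (hdv : (r - 1) ^ 2 < degree E v)
    {f : V → Finset V} (hM : IsPendantMatching E e (e.erase v) f) :
    outerVertices (e.erase v) f ⊆ neighbors E e v := by
  intro x hx
  obtain ⟨g, hg, hgx⟩ := exists_inter_outerVertices_eq_singleton hE hcrown he hv hdv hM hx
  have hvO := disjoint_left.1 (hM.disjoint_outerVertices hE he (erase_subset v e)) hv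
  exact mem_neighbors.2 ⟨g, hg, ne_of_mem_of_not_mem hx hvO,
    mem_of_mem_inter_left (hgx ▸ mem_singleton_self x)⟩

theorem disjoint_or_disjoint_of_mem_otherEdges (hv : v ∈ e) (hdv : (r - 1) ^ 2 < degree E v)
    {f : V → Finset V} (hM : IsPendantMatching E e (e.erase v) f) {w w' : V}
    (hw : w ∈ e.erase v) (hw' : w' ∈ e.erase v) (hww' : w ≠ w') (hg : g ∈ otherEdges E e v) :
    Disjoint g (f w) ∨ Disjoint g (f w') := by
  by_contra! hmeet
  have houter : ∀ y ∈ g, ∀ w ∈ e.erase v, y ∈ f w → y ∈ outerVertices (e.erase v) f := by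
    intro y hyg w hw hyf
    refine mem_outerVertices.2 ⟨w, hw, ?_, hyf⟩
    rintro rfl
    obtain ⟨hyv, hye⟩ := mem_erase.1 hw
    exact hyv (eq_of_mem_otherEdges hE he hv hye hg hyg)
  obtain ⟨y, hyg, hyf⟩ := not_disjoint_iff.1 hmeet.1
  obtain ⟨z, hzg, hzf⟩ := not_disjoint_iff.1 hmeet.2
  have hyO := houter y hyg w hw hyf
  obtain ⟨k, hk, hky⟩ := exists_inter_outerVertices_eq_singleton hE hcrown he hv hdv hM hyO
  have hyk : y ∈ k := mem_of_mem_inter_left (hky ▸ mem_singleton_self y)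
  have hyv : y ≠ v := fun hyv => disjoint_left.1
    (hM.disjoint_outerVertices hE he (erase_subset v e)) hv (hyv ▸ hyO)
  obtain ⟨-, hgE, hvg⟩ := mem_otherEdges.1 hg
  obtain ⟨-, hkE, hvk⟩ := mem_otherEdges.1 hk
  obtain rfl := eq_of_mem_of_mem hE hgE hkE hyv hyg hvg hyk hvk
  obtain rfl : z = y :=
    mem_singleton.1 (hky ▸ mem_inter.2 ⟨hzg, houter z hzg w' hw' hzf⟩)
  exact disjoint_left.1 (hM.pairwiseDisjoint hw hw' hww') hyf hzf

section LargeDegree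

variable (hr : 3 ≤ r) (hd : ∀ w ∈ e, (r - 1) ^ 2 ≤ degree E w)

omit hcrown

include hr hd

theorem exists_isPendantMatching_erase (hv : v ∈ e) (hJ : J ⊆ e.erase v) {f : V → Finset V}
    (hf : IsPendantMatching E e J f) :
    ∃ f', IsPendantMatching E e (e.erase v) f' ∧ ∀ w ∈ J, f' w = f w := by
  have hJe : J ⊆ e := hJ.trans (erase_subset v e)
  have hI : e.erase v \ J ⊆ e := sdiff_subset.trans (erase_subset v e)
  have hcard : (e.erase v \ J).card + J.card = r - 1 := by
    rw [card_sdiff_add_card_eq_card hJ, card_erase_of_mem hv, hE.1 e he]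
  obtain ⟨g, hg, hgf⟩ := exists_isPendantMatching hE he hI (hf.disjoint_outerVertices hE he hJe)
    fun w hw => by
      have hdw := hd w (hI hw)
      have hX := hf.card_outerVertices_le hE
      have hI_pos : 0 < (e.erase v \ J).card := card_pos.2 ⟨w, hw⟩
      rw [← card_otherEdges_add_one he (hI hw)] at hdw
      obtain ⟨k, rfl⟩ := Nat.exists_eq_add_of_le' hr
      obtain ⟨m, hm⟩ := Nat.exists_eq_add_of_le' hI_pos
      simp only [hm, Nat.add_sub_cancel, show k + 3 - 1 = k + 2 by omega] at hcard hX hdw ⊢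
      calc (outerVertices J f).card + m * (k + 2)
          ≤ (m + J.card) * (k + 2) := by linarith
        _ = (k + 1) * (k + 2) := by rw [show m + J.card = k + 1 by omega]
        _ < (otherEdges E e w).card := by linarith
  refine ⟨J.piecewise f g, ?_, fun w hw => piecewise_eq_of_mem _ _ _ hw⟩
  rw [← union_sdiff_of_subset hJ]
  refine hf.union hg fun w hw z hz => ?_
  have hzw := ne_of_mem_of_not_mem hw (mem_sdiff.1 hz).2
  exact (disjoint_of_disjoint_erase hE he (hI hz) (hJe hw) hzw.symm (hg.mem z hz)
    ((hgf z hz).mono_right (subset_biUnion_of_mem (fun w => (f w).erase w) hw))).symm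

include hcrown

theorem degree_le (hv : v ∈ e) : degree E v ≤ (r - 1) ^ 2 + 1 := by
  obtain ⟨f, hf, -⟩ := exists_isPendantMatching_erase hE he hr hd hv (empty_subset _)
    (IsPendantMatching.empty (f := fun _ => ∅))
  exact degree_le_of_isPendantMatching hE hcrown he hv hf

theorem neighbors_subset (hv : v ∈ e) (hdv : (r - 1) ^ 2 < degree E v) (hw : w ∈ e) :
    neighbors E e w ⊆ neighbors E e v := by
  obtain rfl | hvw := eq_or_ne v w
  · rfl
  intro x hx
  obtain ⟨g, hg, hxw, hxg⟩ := mem_neighbors.1 hx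
  have hwv : w ∈ e.erase v := mem_erase.2 ⟨hvw.symm, hw⟩
  obtain ⟨f, hf, hfw⟩ := exists_isPendantMatching_erase hE he hr hd hv (singleton_subset_iff.2 hwv)
    (.singleton hg)
  exact outerVertices_subset_neighbors hE hcrown he hv hdv hf
    (mem_outerVertices.2 ⟨w, hwv, hxw, hfw w (mem_singleton_self w) ▸ hxg⟩)

theorem not_disjoint_of_not_disjoint (hv : v ∈ e) (hdv : (r - 1) ^ 2 < degree E v)
    {w w' : V} (hw : w ∈ e.erase v) (hw' : w' ∈ e.erase v) (hww' : w ≠ w')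
    (hg : g ∈ otherEdges E e v) (hf : f ∈ otherEdges E e w) (hh : h ∈ otherEdges E e w')
    (hgf : ¬Disjoint g f) (hgh : ¬Disjoint g h) : ¬Disjoint f h := by
  intro hfh
  have hpair := (IsPendantMatching.singleton hh).insert hf fun _ _ => hfh
  obtain ⟨F, hF, hFpair⟩ := exists_isPendantMatching_erase hE he hr hd hv
    (insert_subset hw (singleton_subset_iff.2 hw')) hpair
  have hFw : F w = f := (hFpair w (mem_insert_self w {w'})).trans (Function.update_self ..)
  have hFw' : F w' = h := (hFpair w' (mem_insert_of_mem (mem_singleton_self w'))).trans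
    (Function.update_of_ne hww'.symm ..)
  obtain hgF | hgF :=
    disjoint_or_disjoint_of_mem_otherEdges hE hcrown he hv hdv hF hw hw' hww' hg
  · exact hgf (hFw ▸ hgF)
  · exact hgh (hFw' ▸ hgF)

theorem card_neighbors_of_lt_degree (hv : v ∈ e) (hdv : (r - 1) ^ 2 < degree E v) :
    (neighbors E e v).card = (r - 1) ^ 3 := by
  have hle := degree_le hE hcrown he hr hd hv
  rw [← card_otherEdges_add_one he hv] at hle hdv
  rw [card_neighbors hE, show (otherEdges E e v).card = (r - 1) ^ 2 by omega, ← pow_succ]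

theorem card_neighbors_sdiff_le (hv : v ∈ e) (hdv : (r - 1) ^ 2 < degree E v) (hw : w ∈ e) :
    (neighbors E e v \ neighbors E e w).card ≤ r - 1 := by
  have hdw := Nat.mul_le_mul_right (r - 1) (hd w hw)
  rw [← card_otherEdges_add_one he hw, add_mul, one_mul] at hdw
  rw [card_sdiff_of_subset (neighbors_subset hE hcrown he hr hd hv hdv hw),
    card_neighbors_of_lt_degree hE hcrown he hr hd hv hdv, card_neighbors hE, pow_succ]
  omega

theorem exists_forall_mem_neighbors (hv : v ∈ e) (hdv : (r - 1) ^ 2 < degree E v) :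
    ∃ x, ∀ w ∈ e, x ∈ neighbors E e w := by
  by_contra! hmissed
  have hsub : neighbors E e v ⊆
      (e.erase v).biUnion fun w => neighbors E e v \ neighbors E e w := by
    intro x hx
    obtain ⟨w, hw, hxw⟩ := hmissed x
    have hwv : w ≠ v := by
      rintro rfl
      exact hxw hx
    exact mem_biUnion.2 ⟨w, mem_erase.2 ⟨hwv, hw⟩, mem_sdiff.2 ⟨hx, hxw⟩⟩
  have hcard := (card_le_card hsub).trans (card_biUnion_le_card_mul _ _ (r - 1) fun w hw =>
    card_neighbors_sdiff_le hE hcrown he hr hd hv hdv (mem_of_mem_erase hw))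
  rw [card_neighbors_of_lt_degree hE hcrown he hr hd hv hdv, card_erase_of_mem hv, hE.1 e he,
    ← sq] at hcard
  exact (Nat.pow_lt_pow_right (by omega : 1 < r - 1) (by norm_num : 2 < 3)).not_ge hcard

theorem biUnion_inter_nonempty_eq (hv : v ∈ e) (hdv : (r - 1) ^ 2 < degree E v) :
    (E.filter (fun f => (f ∩ e).Nonempty)).biUnion id = e ∪ neighbors E e v := by
  ext x
  simp only [mem_biUnion, mem_filter, id, mem_union]
  constructor
  · rintro ⟨f, ⟨hf, y, hy⟩, hxf⟩
    obtain ⟨hyf, hye⟩ := mem_inter.1 hy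
    by_cases hfe : f = e
    · exact Or.inl (hfe ▸ hxf)
    obtain rfl | hxy := eq_or_ne x y
    · exact Or.inl hye
    · exact Or.inr (neighbors_subset hE hcrown he hr hd hv hdv hye
        (mem_neighbors.2 ⟨f, mem_otherEdges.2 ⟨hfe, hf, hyf⟩, hxy, hxf⟩))
  · rintro (hx | hx)
    · exact ⟨e, ⟨he, x, by simpa using hx⟩, hx⟩
    · obtain ⟨f, hf, -, hxf⟩ := mem_neighbors.1 hx
      obtain ⟨-, hfE, hvf⟩ := mem_otherEdges.1 hf
      exact ⟨f, ⟨hfE, v, mem_inter.2 ⟨hvf, hv⟩⟩, hxf⟩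

theorem card_filter_not_disjoint_le :
    (E.filter (fun f => ¬Disjoint e f)).card ≤ r * (r - 1) ^ 2 + 1 := by
  have hsub : E.filter (fun f => ¬Disjoint e f) ⊆ insert e (e.biUnion (otherEdges E e)) := by
    intro f hf
    obtain ⟨hfE, hef⟩ := mem_filter.1 hf
    obtain ⟨w, hwe, hwf⟩ := not_disjoint_iff.1 hef
    by_cases hfe : f = e
    · exact mem_insert.2 (Or.inl hfe)
    · exact mem_insert_of_mem (mem_biUnion.2 ⟨w, hwe, mem_otherEdges.2 ⟨hfe, hfE, hwf⟩⟩)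
  have hcard := card_biUnion_le_card_mul e (otherEdges E e) ((r - 1) ^ 2) fun w hw =>
    Nat.le_of_add_le_add_right ((card_otherEdges_add_one he hw).trans_le
      (degree_le hE hcrown he hr hd hw))
  rw [hE.1 e he] at hcard
  exact ((card_le_card hsub).trans (card_insert_le _ _)).trans (Nat.add_le_add_right hcard 1)

end LargeDegree

end CrownFree

/-! ### Copies of `C*` -/

omit [DecidableEq V] in
theorem exists_enumeration (hcard : e.card = r) (hI : I ⊆ e) :
    ∃ σ : Fin r → V, Function.Injective σ ∧ (∀ i, σ i ∈ e) ∧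
      ∀ i : Fin r, (i : ℕ) < I.card ↔ σ i ∈ I := by
  classical
  let φ := (e.equivFinOfCardEq hcard).symm
  have hle : I.card ≤ r := hcard ▸ card_le_card hI
  have hinitial : Fintype.card {i : Fin r // (i : ℕ) < I.card} = I.card := by
    simp [Fintype.card_subtype, Fin.card_filter_val_lt, hle]
  have hpreimage : Fintype.card {i : Fin r // (φ i : V) ∈ I} = I.card := by
    let χ : {i : Fin r // (φ i : V) ∈ I} ≃ I :=
      (φ.subtypeEquiv (q := fun x : e => (x : V) ∈ I) fun _ => Iff.rfl).trans
        (Equiv.subtypeSubtypeEquivSubtype fun hx => hI hx)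
    rw [Fintype.card_congr χ, Fintype.card_coe]
  let ψ := Fintype.equivOfCardEq (hinitial.trans hpreimage.symm)
  refine ⟨fun i => φ (ψ.extendSubtype i),
    Subtype.val_injective.comp (φ.injective.comp ψ.extendSubtype.injective),
    fun i => (φ _).2, fun i => ⟨fun hi => ψ.extendSubtype_mem i hi, fun hi => ?_⟩⟩
  by_contra hlt
  exact ψ.extendSubtype_not_mem i hlt hi

theorem hasCStar_of_isPendantMatching (hE : IsLinear r E) (he : e ∈ E) (hI : I ⊆ e)
    (hIcard : I.card = r - 2) (hv : v ∉ e) {F f : V → Finset V}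
    (hF : ∀ w ∈ I, F w ∈ otherEdges E e w) (hvF : ∀ w ∈ I, v ∈ F w)
    (hf : IsPendantMatching E e (e \ I) f) (hfF : ∀ w ∈ e \ I, ∀ z ∈ I, Disjoint (f w) (F z)) :
    HasCStar r E := by
  obtain ⟨σ, hσ, hσe, hσI⟩ := exists_enumeration (hE.1 e he) hI
  simp only [hIcard] at hσI
  have hmem : ∀ w ∈ e, I.piecewise F f w ∈ otherEdges E e w := by
    intro w hw
    by_cases hwI : w ∈ I
    · rw [piecewise_eq_of_mem _ _ _ hwI]
      exact hF w hwI
    · rw [piecewise_eq_of_notMem _ _ _ hwI]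
      exact hf.mem w (mem_sdiff.2 ⟨hw, hwI⟩)
  have hmemE i := (mem_otherEdges.1 (hmem (σ i) (hσe i))).2.1
  have hvG : ∀ i : Fin r, (i : ℕ) < r - 2 → v ∈ I.piecewise F f (σ i) := by
    intro i hi
    rw [piecewise_eq_of_mem _ _ _ ((hσI i).1 hi)]
    exact hvF _ ((hσI i).1 hi)
  refine ⟨v, e, he, fun i => I.piecewise F f (σ i), hmemE,
    fun i => (mem_otherEdges.1 (hmem _ (hσe i))).1, hvG, fun i j hi hj hij => ?_,
    fun i j hi hij => ?_, fun i => ?_, hv⟩ <;> beta_reduce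
  · refine inter_eq_singleton_of_mem_of_mem hE (hmemE i) (hmemE j) (fun hG => hij (hσ ?_))
      (hvG i hi) (hvG j hj)
    exact eq_of_mem_otherEdges hE he (hσe j) (hσe i) (hmem _ (hσe j))
      (hG ▸ (mem_otherEdges.1 (hmem _ (hσe i))).2.2)
  · have hiI : σ i ∉ I := fun hiI => hi.not_gt ((hσI i).2 hiI)
    have hi_mem : σ i ∈ e \ I := mem_sdiff.2 ⟨hσe i, hiI⟩
    rw [← disjoint_iff_inter_eq_empty, piecewise_eq_of_notMem _ _ _ hiI]
    by_cases hjI : σ j ∈ I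
    · rw [piecewise_eq_of_mem _ _ _ hjI]
      exact hfF _ hi_mem _ hjI
    · rw [piecewise_eq_of_notMem _ _ _ hjI]
      exact hf.pairwiseDisjoint hi_mem (mem_sdiff.2 ⟨hσe j, hjI⟩) (hσ.ne hij)
  · rw [inter_eq_singleton_of_mem_otherEdges hE he (hσe i) (hmem _ (hσe i)), card_singleton]

theorem card_insert_biUnion_erase_erase_le (hE : IsLinear r E) (hv : v ∉ e) (hI : I ⊆ e)
    {F : V → Finset V} (hF : ∀ w ∈ I, F w ∈ otherEdges E e w) (hvF : ∀ w ∈ I, v ∈ F w) :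
    (insert v (I.biUnion fun w => ((F w).erase w).erase v)).card ≤ I.card * (r - 2) + 1 := by
  refine (card_insert_le _ _).trans (Nat.add_le_add_right (card_biUnion_le_card_mul _ _ _ ?_) 1)
  intro w hw
  rw [card_erase_of_mem (mem_erase.2 ⟨(ne_of_mem_of_not_mem (hI hw) hv).symm, hvF w hw⟩),
    card_erase_of_mem_otherEdges hE (hF w hw)]
  omega

theorem hasCStar_of_forall_mem_neighbors (hE : IsLinear r E) (he : e ∈ E) (hr : 4 ≤ r)
    (ha : a ∈ e) (hb : b ∈ e) (hab : a ≠ b) (hda : (r - 1) ^ 2 < degree E a)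
    (hdb : (r - 1) ^ 2 < degree E b) (hv : ∀ w ∈ e, v ∈ neighbors E e w) : HasCStar r E := by
  choose! F hF _ hvF using fun w hw => mem_neighbors.1 (hv w hw)
  have hve : v ∉ e := fun hve => disjoint_left.1 (disjoint_neighbors hE he ha) hve (hv a ha)
  have hab_sub : {a, b} ⊆ e := by simp [insert_subset_iff, ha, hb]
  have hI : e \ {a, b} ⊆ e := sdiff_subset
  have hIcard : (e \ {a, b}).card = r - 2 := by
    rw [card_sdiff_of_subset hab_sub, card_pair hab, hE.1 e he]
  let X := insert v ((e \ {a, b}).biUnion fun w => ((F w).erase w).erase v)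
  have hXcard : X.card ≤ (r - 2) * (r - 2) + 1 := hIcard ▸
    card_insert_biUnion_erase_erase_le hE hve hI (fun w hw => hF w (hI hw))
      fun w hw => hvF w (hI hw)
  have hFX : ∀ w ∈ e \ {a, b}, (F w).erase w ⊆ X := fun w hw =>
    subset_insert_iff.2 (subset_biUnion_of_mem (fun w => ((F w).erase w).erase v) hw)
  have heX : Disjoint e X := by
    refine disjoint_left.2 fun w hwe hwX => ?_
    obtain rfl | hwX := mem_insert.1 hwX
    · exact hve hwe
    · obtain ⟨z, hz, hwz⟩ := mem_biUnion.1 hwX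
      obtain ⟨-, hwz, hwF⟩ := by simpa only [mem_erase] using hwz
      exact hwz (eq_of_mem_otherEdges hE he (hI hz) hwe (hF z (hI hz)) hwF)
  obtain ⟨f, hf, hfX⟩ := exists_isPendantMatching hE he hab_sub heX fun w hw => by
    have hdw : (r - 1) ^ 2 < degree E w := by
      obtain rfl | rfl : w = a ∨ w = b := by simpa using hw
      exacts [hda, hdb]
    rw [← card_otherEdges_add_one he (hab_sub hw)] at hdw
    rw [card_pair hab]
    obtain ⟨k, rfl⟩ := Nat.exists_eq_add_of_le' hr
    simp only [show k + 4 - 1 = k + 3 by omega, show k + 4 - 2 = k + 2 by omega] at *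
    nlinarith
  have hsdiff : e \ (e \ {a, b}) = {a, b} := Finset.sdiff_sdiff_eq_self hab_sub
  refine hasCStar_of_isPendantMatching hE he hI hIcard hve (fun w hw => hF w (hI hw))
    (fun w hw => hvF w (hI hw)) (hsdiff.symm ▸ hf) (hsdiff.symm ▸ fun w hw z hz => ?_)
  exact disjoint_of_disjoint_erase hE he (hab_sub hw) (hI hz)
    (ne_of_mem_of_not_mem hw (mem_sdiff.1 hz).2) (hf.mem w hw) ((hfX w hw).mono_right (hFX z hz))

/-! ### Linear `3`-graphs -/

theorem hasCrown_three {p q s : V} {f₁ f₂ f₃ : Finset V} (hE : IsLinear 3 E)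
    (he : {p, q, s} ∈ E) (hf₁ : f₁ ∈ E) (hf₂ : f₂ ∈ E) (hf₃ : f₃ ∈ E) (hp : p ∈ f₁) (hq : q ∈ f₂)
    (hs : s ∈ f₃) (h₁₂ : Disjoint f₁ f₂) (h₁₃ : Disjoint f₁ f₃) (h₂₃ : Disjoint f₂ f₃) :
    HasCrown 3 E := by
  have hqs : q ≠ s := disjoint_iff_ne.1 h₂₃ q hq s hs
  have hf₁' : f₁ ∈ otherEdges E {p, q, s} p := mem_otherEdges.2
    ⟨fun h => disjoint_left.1 h₁₂ (h ▸ by simp) hq, hf₁, hp⟩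
  have hf₂' : f₂ ∈ otherEdges E {p, q, s} q := mem_otherEdges.2
    ⟨fun h => disjoint_left.1 h₂₃ (h ▸ by simp) hs, hf₂, hq⟩
  have hf₃' : f₃ ∈ otherEdges E {p, q, s} s := mem_otherEdges.2
    ⟨fun h => disjoint_left.1 h₁₃ hp (h ▸ by simp), hf₃, hs⟩
  have hM := ((IsPendantMatching.singleton hf₃').insert hf₂' fun _ _ => h₂₃).insert hf₁' ?_
  · exact hM.hasCrown hE he
  · simp [Function.update_of_ne hqs.symm, h₁₂, h₁₃]

/-- The edges through `v` split `W` into pairs `{x, α x}`, and `α` is the identity outside `W`.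
This is the structure of the neighborhood of a vertex in a linear `3`-graph. -/
structure IsPairing (E : Finset (Finset V)) (v : V) (W : Finset V) (α : V → V) : Prop where
  involutive : Function.Involutive α
  notMem : v ∉ W
  mem : ∀ x ∈ W, α x ∈ W
  ne : ∀ x ∈ W, α x ≠ x
  edge_mem : ∀ x ∈ W, {v, x, α x} ∈ E
  apply_of_notMem : ∀ x ∉ W, α x = x

theorem exists_eq_triple (hcard : e.card = 3) (ha : a ∈ e) (hb : b ∈ e) (hab : a ≠ b) :
    ∃ c, a ≠ c ∧ b ≠ c ∧ e = {a, b, c} := by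
  obtain ⟨c, hc⟩ : ∃ c, (e.erase a).erase b = {c} := by
    rw [← card_eq_one, card_erase_of_mem (mem_erase.2 ⟨hab.symm, hb⟩), card_erase_of_mem ha, hcard]
  have hc_mem := mem_singleton_self c
  rw [← hc, mem_erase, mem_erase] at hc_mem
  refine ⟨c, hc_mem.2.1.symm, hc_mem.1.symm, ?_⟩
  rw [← hc, insert_erase (mem_erase.2 ⟨hab.symm, hb⟩), insert_erase ha]

theorem exists_pair (hE : IsLinear 3 E) (hx : x ∈ neighbors E e v) :
    ∃ y ∈ neighbors E e v, y ≠ x ∧ {v, x, y} ∈ E := by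
  obtain ⟨f, hf, hxv, hxf⟩ := mem_neighbors.1 hx
  obtain ⟨-, hfE, hvf⟩ := mem_otherEdges.1 hf
  obtain ⟨y, hvy, hxy, rfl⟩ := exists_eq_triple (hE.1 f hfE) hvf hxf hxv.symm
  exact ⟨y, mem_neighbors.2 ⟨_, hf, hvy.symm, by simp⟩, hxy.symm, hfE⟩

theorem notMem_neighbors : v ∉ neighbors E e v := fun hv =>
  let ⟨_, _, hvv, _⟩ := mem_neighbors.1 hv
  hvv rfl

theorem exists_isPairing (hE : IsLinear 3 E) (e : Finset V) (v : V) :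
    ∃ α, IsPairing E v (neighbors E e v) α := by
  choose! α hαmem hαne hα using fun x (hx : x ∈ neighbors E e v) => exists_pair hE hx
  have hinv : ∀ x ∈ neighbors E e v, α (α x) = x := by
    intro x hx
    have hxv : α x ≠ v := ne_of_mem_of_not_mem (hαmem x hx) notMem_neighbors
    have hedge : {v, x, α x} = {v, α x, α (α x)} :=
      eq_of_mem_of_mem hE (hα x hx) (hα _ (hαmem x hx)) hxv (by simp) (by simp) (by simp) (by simp)
    have hmem : α (α x) ∈ ({v, x, α x} : Finset V) := hedge ▸ by simp
    have hne : α (α x) ≠ v := ne_of_mem_of_not_mem (hαmem _ (hαmem x hx)) notMem_neighbors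
    simpa [hne, hαne _ (hαmem x hx)] using hmem
  have heq : ∀ x ∈ neighbors E e v, (neighbors E e v).piecewise α id x = α x := fun x hx =>
    piecewise_eq_of_mem _ _ _ hx
  have hid : ∀ x ∉ neighbors E e v, (neighbors E e v).piecewise α id x = x := fun x hx =>
    piecewise_eq_of_notMem _ _ _ hx
  refine ⟨(neighbors E e v).piecewise α id, fun x => ?_, notMem_neighbors,
    fun x hx => heq x hx ▸ hαmem x hx, fun x hx => heq x hx ▸ hαne x hx,
    fun x hx => heq x hx ▸ hα x hx, hid⟩
  by_cases hx : x ∈ neighbors E e v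
  · rw [heq x hx, heq _ (hαmem x hx), hinv x hx]
  · rw [hid x hx, hid x hx]

namespace IsPairing

variable {W : Finset V} {α β : V → V}

theorem apply_notMem (hα : IsPairing E v W α) (hE : IsLinear r E) (hg : g ∈ E) (hvg : v ∉ g)
    (hx : x ∈ W) (hxg : x ∈ g) : α x ∉ g := by
  intro hαg
  have hedge : {v, x, α x} = g := eq_of_mem_of_mem hE (hα.edge_mem x hx) hg (hα.ne x hx).symm
    (by simp) (by simp) hxg hαg
  exact hvg (hedge ▸ by simp)

theorem apply_ne_apply {W' : Finset V} (hα : IsPairing E a W α) (hβ : IsPairing E b W' β)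
    (hE : IsLinear r E) (hab : a ≠ b) (haW' : a ∉ W') (hx : x ∈ W) (hx' : x ∈ W') : α x ≠ β x := by
  have haβ : a ∉ ({b, x, β x} : Finset V) := by
    simp only [mem_insert, mem_singleton, not_or]
    exact ⟨hab, (ne_of_mem_of_not_mem hx hα.notMem).symm,
      (ne_of_mem_of_not_mem (hβ.mem x hx') haW').symm⟩
  exact fun hαβ => hα.apply_notMem hE (hβ.edge_mem x hx') haβ hx (by simp) (by simp [hαβ])

end IsPairing

/-- Two commuting pairings of the same set `W`, at the vertices `a` and `b`. At most two vertices
`x ∈ W` violate `{c, x, α (β x)} ∈ E`, and such vertices form a single pair `{x, α (β x)}`. -/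
structure IsGrid (E : Finset (Finset V)) (a b c : V) (W : Finset V) (α β : V → V) : Prop where
  left : IsPairing E a W α
  right : IsPairing E b W β
  commute : ∀ x, α (β x) = β (α x)
  diagonal : ∀ x ∈ W, {c, x, α (β x)} ∉ E → ∀ y ∈ W, y ≠ x → y ≠ α (β x) → {c, y, α (β y)} ∈ E
  left_ne_right : a ≠ b
  left_ne_diagonal : a ≠ c
  right_ne_diagonal : b ≠ c
  notMem : c ∉ W

/-- The orbit of `x` under two commuting involutions `α` and `β`. -/
def orbit (α β : V → V) (x : V) : Finset V :=
  {x, α x, β x, α (β x)}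

theorem disjoint_orbit_edge {W O : Finset V} {p q y z y' z' : V} (hpq : p ≠ q) (hp : p ∉ W)
    (hq : q ∉ W) (hO : O ⊆ W) (hy : y ∈ W \ O) (hz : z ∈ W \ O) (hy' : y' ∈ O) (hz' : z' ∈ O) :
    Disjoint ({p, y, z} : Finset V) {q, y', z'} := by
  have hO' : ∀ t ∈ O, t ∈ W := fun _ ht => hO ht
  refine disjoint_left.2 fun t => ?_
  simp only [mem_insert, mem_singleton, mem_sdiff] at *
  grind

namespace IsGrid

variable {W : Finset V} {α β : V → V}

theorem symm (hG : IsGrid E a b c W α β) : IsGrid E b a c W β α where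
  left := hG.right
  right := hG.left
  commute x := (hG.commute x).symm
  diagonal := by simpa only [hG.commute] using hG.diagonal
  left_ne_right := hG.left_ne_right.symm
  left_ne_diagonal := hG.right_ne_diagonal
  right_ne_diagonal := hG.left_ne_diagonal
  notMem := hG.notMem

theorem apply_apply_apply (hG : IsGrid E a b c W α β) (x : V) : α (β (α x)) = β x := by
  rw [hG.commute, hG.left.involutive]

theorem orbit_symm (hG : IsGrid E a b c W α β) (x : V) : orbit β α x = orbit α β x := by
  rw [orbit, orbit, hG.commute, insert_comm (α x)]

theorem orbit_subset (hG : IsGrid E a b c W α β) (hx : x ∈ W) : orbit α β x ⊆ W := by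
  simp [orbit, insert_subset_iff, hx, hG.left.mem, hG.right.mem]

theorem left_mem_sdiff_orbit (hG : IsGrid E a b c W α β) (hw : w ∈ W \ orbit α β x) :
    α w ∈ W \ orbit α β x := by
  obtain ⟨hw, hwx⟩ := mem_sdiff.1 hw
  have hclosed : ∀ y ∈ orbit α β x, α y ∈ orbit α β x := by
    simp [orbit, hG.left.involutive _]
  exact mem_sdiff.2 ⟨hG.left.mem w hw, fun hαw => hwx (hG.left.involutive w ▸ hclosed _ hαw)⟩

theorem right_mem_sdiff_orbit (hG : IsGrid E a b c W α β) (hw : w ∈ W \ orbit α β x) :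
    β w ∈ W \ orbit α β x := by
  rw [← hG.orbit_symm] at hw ⊢
  exact hG.symm.left_mem_sdiff_orbit hw

theorem apply_apply_ne (hG : IsGrid E a b c W α β) (hE : IsLinear r E) (hx : x ∈ W) :
    α (β x) ≠ x := by
  intro hαβ
  exact hG.left.apply_ne_apply hG.right hE hG.left_ne_right hG.left.notMem hx hx
    ((hG.left.involutive.eq_iff.1 hαβ).symm)

theorem diagonal_edge_notMem (hG : IsGrid E a b c W α β) (hE : IsLinear r E) (hg : g ∈ E)
    (hcg : c ∉ g) (hx : x ∈ W) (hxg : x ∈ g) (hαβx : α (β x) ∈ g) : {c, x, α (β x)} ∉ E := by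
  intro hedge
  have hg_eq : {c, x, α (β x)} = g := eq_of_mem_of_mem hE hedge hg (hG.apply_apply_ne hE hx).symm
    (by simp) (by simp) hxg hαβx
  exact hcg (hg_eq ▸ by simp)

theorem antidiagonal_edge_mem (hG : IsGrid E a b c W α β) (hx : x ∈ W)
    (hdiag : {c, x, α (β x)} ∉ E) : {c, α x, β x} ∈ E := by
  rw [← hG.apply_apply_apply x]
  exact hG.diagonal x hx hdiag (α x) (hG.left.mem x hx) (hG.left.ne x hx) fun hαx =>
    hG.right.ne x hx (hG.left.involutive.injective hαx).symm

theorem mem_or_apply_mem (hG : IsGrid E a b c W α β) (hE : IsLinear 3 E) (hcrown : ¬HasCrown 3 E)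
    (hg : g ∈ E) (hag : a ∉ g) (hbg : b ∉ g) (hcg : c ∉ g) (hx : x ∈ W) (hxg : x ∈ g)
    (hw : w ∈ W \ orbit α β x) : w ∈ g ∨ α w ∈ g := by
  have hαx := hG.left.apply_notMem hE hg hag hx hxg
  obtain ⟨p, y, hk, hap, hp, hpg, hyg, hy⟩ : ∃ p y, {p, α x, y} ∈ E ∧ a ≠ p ∧ p ∉ W ∧ p ∉ g ∧
      y ∉ g ∧ y ∈ orbit α β x := by
    by_cases hδ : α (β x) ∈ g
    · exact ⟨c, β x, hG.antidiagonal_edge_mem hx (hG.diagonal_edge_notMem hE hg hcg hx hxg hδ),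
        hG.left_ne_diagonal, hG.notMem, hcg, hG.right.apply_notMem hE hg hbg hx hxg,
        by simp [orbit]⟩
    · exact ⟨b, α (β x), hG.commute x ▸ hG.right.edge_mem _ (hG.left.mem x hx),
        hG.left_ne_right, hG.right.notMem, hbg, hδ, by simp [orbit]⟩
  -- Otherwise `{a, x, α x}` is the base of a crown, with pendant edges `{a, w, α w}`, `g` and
  -- `{p, α x, y}`.
  by_contra! hwg
  refine hcrown (hasCrown_three hE (hG.left.edge_mem x hx)
    (hG.left.edge_mem w (mem_sdiff.1 hw).1) hg hk (by simp) hxg (by simp) ?_ ?_ ?_)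
  · simp [hag, hwg]
  · exact disjoint_orbit_edge hap hG.left.notMem hp (hG.orbit_subset hx) hw
      (hG.left_mem_sdiff_orbit hw) (by simp [orbit]) hy
  · simp [hpg, hyg, hαx]

theorem exists_mem_and_apply_apply_mem (hG : IsGrid E a b c W α β) (hE : IsLinear 3 E)
    (hcrown : ¬HasCrown 3 E) (hW : 4 < W.card) (hg : g ∈ E) (hag : a ∉ g) (hbg : b ∉ g)
    (hcg : c ∉ g) (hx : x ∈ W) (hxg : x ∈ g) :
    ∃ w ∈ W \ orbit α β x, w ∈ g ∧ α (β w) ∈ g := by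
  have hrow : ∀ w ∈ W \ orbit α β x, w ∈ g ∨ α w ∈ g := fun w hw =>
    hG.mem_or_apply_mem hE hcrown hg hag hbg hcg hx hxg hw
  have hcolumn : ∀ w ∈ W \ orbit α β x, w ∈ g ∨ β w ∈ g := fun w hw =>
    hG.symm.mem_or_apply_mem hE hcrown hg hbg hag hcg hx hxg ((hG.orbit_symm x).symm ▸ hw)
  obtain ⟨w, hw⟩ : (W \ orbit α β x).Nonempty := by
    rw [sdiff_nonempty]
    exact fun hsub => hW.not_ge ((card_le_card hsub).trans card_le_four)
  obtain ⟨w, hw, hwg⟩ : ∃ w ∈ W \ orbit α β x, w ∈ g := by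
    obtain hwg | hαwg := hrow w hw
    exacts [⟨w, hw, hwg⟩, ⟨α w, hG.left_mem_sdiff_orbit hw, hαwg⟩]
  have hαwg := hG.left.apply_notMem hE hg hag (mem_sdiff.1 hw).1 hwg
  exact ⟨w, hw, hwg, hG.commute w ▸ (hcolumn _ (hG.left_mem_sdiff_orbit hw)).resolve_left hαwg⟩

theorem apply_apply_mem (hG : IsGrid E a b c W α β) (hE : IsLinear 3 E)
    (hcrown : ¬HasCrown 3 E) (hg : g ∈ E) (hag : a ∉ g) (hbg : b ∉ g) (hcg : c ∉ g) (hx : x ∈ W)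
    (hxg : x ∈ g) (hw : w ∈ W \ orbit α β x) (hwg : w ∈ g) (hδw : α (β w) ∈ g) :
    α (β x) ∈ g := by
  -- Otherwise `{c, x, α (β x)}` is the base of a crown, with pendant edges `{c, α w, β w}`, `g` and
  -- `{a, α (β x), β x}`.
  by_contra hδ
  have hwW := (mem_sdiff.1 hw).1
  have hβw := hG.right_mem_sdiff_orbit hw
  have hαwg := hG.left.apply_notMem hE hg hag hwW hwg
  have hβwg := hG.right.apply_notMem hE hg hbg hwW hwg
  have hdiag := hG.diagonal_edge_notMem hE hg hcg hwW hwg hδw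
  have hcx : {c, x, α (β x)} ∈ E := by
    refine hG.diagonal w hwW hdiag x hx ?_ fun hxw => ?_
    · rintro rfl
      simp [orbit] at hw
    · have hβw' : β w = α x := by rw [hxw, hG.left.involutive]
      simp [orbit, hβw'] at hβw
  have hk := hG.left.edge_mem (α (β x)) (hG.left.mem _ (hG.right.mem x hx))
  rw [hG.left.involutive] at hk
  refine hcrown (hasCrown_three hE hcx (hG.antidiagonal_edge_mem hwW hdiag) hg hk (by simp) hxg
    (by simp) ?_ ?_ ?_)
  · simp [hcg, hαwg, hβwg]
  · exact disjoint_orbit_edge hG.left_ne_diagonal.symm hG.notMem hG.left.notMem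
      (hG.orbit_subset hx) (hG.left_mem_sdiff_orbit hw) hβw (by simp [orbit]) (by simp [orbit])
  · simp [hag, hδ, hG.right.apply_notMem hE hg hbg hx hxg]

theorem disjoint_edge (hG : IsGrid E a b c W α β) (hE : IsLinear 3 E) (hcrown : ¬HasCrown 3 E)
    (hW : 4 < W.card) (hg : g ∈ E) (hag : a ∉ g) (hbg : b ∉ g) (hcg : c ∉ g) : Disjoint W g := by
  refine disjoint_left.2 fun x hx hxg => ?_
  obtain ⟨w, hw, hwg, hδwg⟩ :=
    hG.exists_mem_and_apply_apply_mem hE hcrown hW hg hag hbg hcg hx hxg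
  have hδxg := hG.apply_apply_mem hE hcrown hg hag hbg hcg hx hxg hw hwg hδwg
  have hδw := hG.left_mem_sdiff_orbit (hG.right_mem_sdiff_orbit hw)
  have hxδ := hG.apply_apply_ne hE hx
  have hwδ := hG.apply_apply_ne hE (mem_sdiff.1 hw).1
  have hsub : {x, α (β x), w, α (β w)} ⊆ g := by
    simp [insert_subset_iff, hxg, hδxg, hwg, hδwg]
  have hcard : ({x, α (β x), w, α (β w)} : Finset V).card = 4 := by
    simp only [orbit, mem_sdiff, mem_insert, mem_singleton, not_or] at hw hδw
    grind
  have hle := card_le_card hsub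
  rw [hcard, hE.1 g hg] at hle
  omega

end IsGrid

namespace IsPairing

variable {W D : Finset V} {α β γ : V → V}

theorem edge_mem_otherEdges (hα : IsPairing E v W α) (heW : Disjoint e W) (hx : x ∈ W) :
    {v, x, α x} ∈ otherEdges E e v :=
  mem_otherEdges.2 ⟨fun hedge => disjoint_left.1 heW (hedge ▸ by simp) hx, hα.edge_mem x hx,
    mem_insert_self v _⟩

theorem apply_apply_eq (hE : IsLinear 3 E) (hcrown : ¬HasCrown 3 E) (he : e ∈ E)
    (hd : ∀ w ∈ e, 4 ≤ degree E w) (ha : a ∈ e) (hda : 4 < degree E a)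
    (hb : b ∈ e.erase a) (hc : c ∈ e.erase a) (hbc : b ≠ c) (heW : Disjoint e W) (hDW : D ⊆ W)
    (hα : IsPairing E a W α) (hβ : IsPairing E b W β) (hγ : IsPairing E c D γ) (hx : x ∈ D) :
    β (α x) = γ x := by
  have hxW := hDW hx
  have hαx := hα.mem x hxW
  have hmeet : ¬Disjoint {b, α x, β (α x)} {c, x, γ x} :=
    not_disjoint_of_not_disjoint hE hcrown he le_rfl hd ha hda hb hc hbc
      (hα.edge_mem_otherEdges heW hxW) (hβ.edge_mem_otherEdges heW hαx)
      (hγ.edge_mem_otherEdges (heW.mono_right hDW) hx) (by simp) (by simp)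
  obtain ⟨hba, -⟩ := mem_erase.1 hb
  obtain ⟨hca, hce⟩ := mem_erase.1 hc
  have hcW : c ∉ W := disjoint_left.1 heW hce
  have hαγ := hα.apply_ne_apply hγ hE hca.symm (fun haD => hα.notMem (hDW haD)) hxW hx
  have hαβ := hα.apply_ne_apply hβ hE hba.symm hα.notMem hxW hxW
  have hβα : β (α x) ≠ x := fun h => hαβ (hβ.involutive.eq_iff.1 h)
  have hγW := hDW (hγ.mem x hx)
  have hβW := hβ.mem _ hαx
  have hbW := hβ.notMem
  have hαx_ne := hα.ne x hxW
  obtain ⟨y, hyβ, hyγ⟩ := not_disjoint_iff.1 hmeet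
  simp only [mem_insert, mem_singleton] at hyβ hyγ
  grind

theorem commute (hα : IsPairing E a W α) (hβ : IsPairing E b W β) (hne : ∀ x ∈ W, α x ≠ β x)
    (hcard : (W \ D).card ≤ 2) (hD : ∀ x ∈ D, α (β x) = β (α x)) (x : V) :
    α (β x) = β (α x) := by
  by_cases hx : x ∈ W
  swap
  · simp only [hα.apply_of_notMem x hx, hβ.apply_of_notMem x hx]
  by_contra hcomm
  have hαx : α x ∉ D := by
    intro hαx
    have hcomm' := hD _ hαx
    rw [hα.involutive] at hcomm'
    exact hcomm (hα.involutive.eq_iff.2 hcomm'.symm)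
  have hβx : β x ∉ D := by
    intro hβx
    have hcomm' := hD _ hβx
    rw [hβ.involutive] at hcomm'
    exact hcomm (hβ.involutive.eq_iff.1 hcomm'.symm)
  exact hcard.not_gt (two_lt_card.2 ⟨x, mem_sdiff.2 ⟨hx, fun hxD => hcomm (hD x hxD)⟩, α x,
    mem_sdiff.2 ⟨hα.mem x hx, hαx⟩, β x, mem_sdiff.2 ⟨hβ.mem x hx, hβx⟩, (hα.ne x hx).symm,
    (hβ.ne x hx).symm, hne x hx⟩)

theorem isGrid (hE : IsLinear r E) (hα : IsPairing E a W α) (hβ : IsPairing E b W β)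
    (hγ : IsPairing E c D γ) (hab : a ≠ b) (hac : a ≠ c) (hbc : b ≠ c) (hc : c ∉ W)
    (hcard : (W \ D).card ≤ 2) (hαβ : ∀ x ∈ D, α (β x) = γ x) (hβα : ∀ x ∈ D, β (α x) = γ x) :
    IsGrid E a b c W α β := by
  have hne : ∀ x ∈ W, α x ≠ β x := fun x hx => hα.apply_ne_apply hβ hE hab hα.notMem hx hx
  have hcomm := hα.commute hβ hne hcard fun x hx => (hαβ x hx).trans (hβα x hx).symm
  refine ⟨hα, hβ, hcomm, fun x hx hdiag y hy hyx hyδ => ?_, hab, hac, hbc, hc⟩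
  have hedge : ∀ x ∈ D, {c, x, α (β x)} ∈ E := fun x hx => hαβ x hx ▸ hγ.edge_mem x hx
  refine hedge y (by_contra fun hyD => hcard.not_gt (two_lt_card.2 ?_))
  have hxD : x ∉ D := fun hxD => hdiag (hedge x hxD)
  have hδD : α (β x) ∉ D := by
    intro hδD
    have hδδ : γ (α (β x)) = x := by
      rw [← hβα _ hδD, hα.involutive, hβ.involutive]
    exact hxD (hδδ ▸ hγ.mem _ hδD)
  have hδx : α (β x) ≠ x := fun h => hne x hx (hα.involutive.eq_iff.1 h).symm
  exact ⟨x, mem_sdiff.2 ⟨hx, hxD⟩, y, mem_sdiff.2 ⟨hy, hyD⟩, α (β x),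
    mem_sdiff.2 ⟨hα.mem _ (hβ.mem x hx), hδD⟩, hyx.symm, hδx.symm, hyδ⟩

end IsPairing

theorem disjoint_neighbors_of_disjoint_three (hE : IsLinear 3 E) (hcrown : ¬HasCrown 3 E)
    (he : e ∈ E) (hd : ∀ w ∈ e, 4 ≤ degree E w) (ha : a ∈ e) (hb : b ∈ e) (hab : a ≠ b)
    (hda : 4 < degree E a) (hdb : 4 < degree E b) (hg : g ∈ E)
    (heg : Disjoint e g) : Disjoint (neighbors E e a) g := by
  obtain ⟨c, hac, hbc, hc⟩ := exists_eq_triple (hE.1 e he) ha hb hab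
  have hce : c ∈ e := hc ▸ by simp
  have hsub {v} (hv : v ∈ e) := neighbors_subset hE hcrown he le_rfl hd ha hda hv
  have hWb : neighbors E e b = neighbors E e a :=
    (hsub hb).antisymm (neighbors_subset hE hcrown he le_rfl hd hb hdb ha)
  obtain ⟨α, hα⟩ := exists_isPairing hE e a
  obtain ⟨β, hβ⟩ := exists_isPairing hE e b
  obtain ⟨γ, hγ⟩ := exists_isPairing hE e c
  rw [hWb] at hβ
  have heW := disjoint_neighbors hE he ha
  have hG : IsGrid E a b c (neighbors E e a) α β := by
    refine hα.isGrid hE hβ hγ hab hac hbc (disjoint_left.1 heW hce)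
      (card_neighbors_sdiff_le hE hcrown he le_rfl hd ha hda hce) (fun x => ?_) fun x => ?_
    · exact hβ.apply_apply_eq hE hcrown he hd hb hdb (mem_erase.2 ⟨hab, ha⟩)
        (mem_erase.2 ⟨hbc.symm, hce⟩) hac heW (hsub hce) hα hγ
    · exact hα.apply_apply_eq hE hcrown he hd ha hda (mem_erase.2 ⟨hab.symm, hb⟩)
        (mem_erase.2 ⟨hac.symm, hce⟩) hbc heW (hsub hce) hβ hγ
  refine hG.disjoint_edge hE hcrown ?_ hg (disjoint_left.1 heg ha) (disjoint_left.1 heg hb)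
    (disjoint_left.1 heg hce)
  rw [card_neighbors_of_lt_degree hE hcrown he le_rfl hd ha hda]
  norm_num

theorem disjoint_neighbors_of_disjoint (hr : 3 ≤ r) (hE : IsLinear r E) (hcrown : ¬HasCrown r E)
    (hcstar : ¬HasCStar r E) (he : e ∈ E) (hd : ∀ w ∈ e, (r - 1) ^ 2 ≤ degree E w) (ha : a ∈ e)
    (hb : b ∈ e) (hab : a ≠ b) (hda : (r - 1) ^ 2 < degree E a) (hdb : (r - 1) ^ 2 < degree E b)
    (hg : g ∈ E) (heg : Disjoint e g) : Disjoint (neighbors E e a) g := by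
  obtain rfl | hr4 := hr.eq_or_lt
  · exact disjoint_neighbors_of_disjoint_three hE hcrown he hd ha hb hab hda hdb hg heg
  · obtain ⟨v, hv⟩ := exists_forall_mem_neighbors hE hcrown he hr hd ha hda
    exact absurd (hasCStar_of_forall_mem_neighbors hE he hr4 ha hb hab hda hdb hv) hcstar

end LinearHypergraph

open LinearHypergraph in
theorem key_lemma_general {V : Type*} [DecidableEq V] {r : ℕ} (hr : 3 ≤ r) {E : Finset (Finset V)}
    (hE : IsLinear r E) (hcrown : ¬HasCrown r E) (hcstar : ¬HasCStar r E) {e : Finset V}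
    (he : e ∈ E) {a b : V} (ha : a ∈ e) (hb : b ∈ e) (hab : a ≠ b)
    (hda : (r - 1) ^ 2 + 1 ≤ degree E a) (hdb : (r - 1) ^ 2 + 1 ≤ degree E b)
    (hd : ∀ w ∈ e, w ≠ a → w ≠ b → (r - 1) ^ 2 ≤ degree E w) {S : Finset V}
    (hS : S = (E.filter (fun f => (f ∩ e).Nonempty)).biUnion id) :
    S.card = (r - 1) ^ 3 + r ∧
    (∀ v ∈ S, degree E v ≤ (r - 1) ^ 2 + 1) ∧
    (E.filter (fun f => (f ∩ S).Nonempty)).card ≤ r * (r - 1) ^ 2 + 1 := by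
  replace hd : ∀ w ∈ e, (r - 1) ^ 2 ≤ degree E w := by
    intro w hw
    by_cases hwab : w = a ∨ w = b
    · obtain rfl | rfl := hwab <;> omega
    · exact hd w hw (mt Or.inl hwab) (mt Or.inr hwab)
  rw [biUnion_inter_nonempty_eq hE hcrown he hr hd ha hda] at hS
  have hmeet : ∀ f ∈ E, ¬Disjoint S f → ¬Disjoint e f := fun f hf hSf hef => hSf <|
    hS ▸ disjoint_union_left.2 ⟨hef, disjoint_neighbors_of_disjoint hr hE hcrown hcstar he hd ha hb
      hab hda hdb hf hef⟩
  refine ⟨?_, fun v hv => ?_, ?_⟩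
  · rw [hS, card_union_of_disjoint (disjoint_neighbors hE he ha), hE.1 e he,
      card_neighbors_of_lt_degree hE hcrown he hr hd ha hda, add_comm]
  · by_cases hve : v ∈ e
    · exact degree_le hE hcrown he hr hd hve
    · have hr_le : r ≤ (r - 1) ^ 2 + 1 := by
        have hle := Nat.le_self_pow two_ne_zero (r - 1)
        omega
      exact (degree_le_of_forall_not_disjoint hE he hve fun f hf hvf =>
        hmeet f hf (not_disjoint_iff.2 ⟨v, hv, hvf⟩)).trans hr_le
  · refine (card_le_card fun f hf => ?_).trans (card_filter_not_disjoint_le hE hcrown he hr hd)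
    obtain ⟨hfE, hfS⟩ := mem_filter.1 hf
    rw [inter_comm, ← not_disjoint_iff_nonempty_inter] at hfS
    exact mem_filter.2 ⟨hfE, hmeet f hfE hfS⟩

/-- Key lemma: for an edge `e` with `D(e) ≥ {(r-1)^2+1, (r-1)^2+1, (r-1)^2, …}` in a
`{C_{1r}, C*}`-free linear `r`-graph, the union `S` of all edges meeting `e` has exactly
`(r-1)^3 + r` vertices, all of degree at most `(r-1)^2 + 1`, and at most
`r(r-1)^2 + 1` edges intersect `S`. -/
theorem key_lemma {V : Type*} [DecidableEq V] [Fintype V]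
    (r : ℕ) (hr : 3 ≤ r) (E : Finset (Finset V)) (hlin : IsLinear r E)
    (hfree₁ : ¬ HasCrown r E) (hfree₂ : ¬ HasCStar r E)
    (e : Finset V) (he : e ∈ E) (u : Fin r → V)
    (hinj : Function.Injective u) (hmem : ∀ i, u i ∈ e)
    (hd1 : (r - 1) ^ 2 + 1 ≤ degree E (u ⟨0, by omega⟩))
    (hd2 : (r - 1) ^ 2 + 1 ≤ degree E (u ⟨1, by omega⟩))
    (hdi : ∀ i : Fin r, 2 ≤ (i : ℕ) → (r - 1) ^ 2 ≤ degree E (u i))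
    (S : Finset V) (hS : S = (E.filter (fun f => (f ∩ e).Nonempty)).biUnion id) :
    S.card = (r - 1) ^ 3 + r ∧
    (∀ v ∈ S, degree E v ≤ (r - 1) ^ 2 + 1) ∧
    (E.filter (fun f => (f ∩ S).Nonempty)).card ≤ r * (r - 1) ^ 2 + 1 := by
  refine key_lemma_general hr hlin hfree₁ hfree₂ he (hmem _) (hmem _) (hinj.ne (by simp)) hd1 hd2
    (fun w hw hw0 hw1 => ?_) hS
  obtain ⟨i, -, rfl⟩ := surjOn_of_injOn_of_card_le (s := univ) u (fun i _ => hmem i) hinj.injOn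
    (by simp [hlin.1 e he]) hw
  exact hdi i ((Nat.two_le_iff _).2 ⟨fun hi => hw0 (congrArg u (Fin.ext hi)),
    fun hi => hw1 (congrArg u (Fin.ext hi))⟩)
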